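/- (Proposition 1, identifiability sharpness.) Let h : ℂ^N → ℝ^M have measurement distance D(h) ≥ 1. Then ⌊(D(h) − 1)/2⌋ is the maximum sparsity level of identifiable outliers: there exists an outlier vector a_o ∈ ℝ^M with ‖a_o‖₀ = ⌊(D(h) − 1)/2⌋ + 1 that is not identifiable, i.e., there exist v_o ∈ ℂ^N and a pair (v, a) ≠ (v_o, a_o) with h(v) + a = h(v_o) + a_o and ‖a‖₀ ≤ ‖a_o‖₀. -/

import Mathlib

/-- The ℓ0-pseudonorm: number of nonzero entries of a vector in ℝ^M. -/
noncomputable def l0 {M : ℕ} (a : Fin M → ℝ) : ℕ :=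
  (Finset.univ.filter fun i => a i ≠ 0).card

/-!
Split the difference `x = h v - h v'` of the measurements of two distinct inputs as `x = a₀ - a`;
then `h v + a = h v' + a₀`, so `a₀` is not identifiable as soon as `‖a‖₀ ≤ ‖a₀‖₀`. The support `T`
of `a₀` can be prescribed, and `a₀` can agree with `x` wherever both are nonzero, so that `a` is
supported on the symmetric difference of `T` and the support of `x`. If `‖x‖₀ ≤ 2k`, some `T` with
`k` elements, chosen inside the support of `x` or containing it, makes this symmetric difference
have at most `k` elements.
-/

open Finset Function
open scoped symmDiff

theorem exists_support_eq_and_support_sub_eq_symmDiff {ι G : Type*} [AddGroup G] [Nontrivial G]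
    (x : ι → G) (T : Set ι) :
    ∃ a : ι → G, support a = T ∧ support (a - x) = T ∆ support x := by
  classical
  obtain ⟨g, hg⟩ := exists_ne (0 : G)
  refine ⟨fun i ↦ if i ∈ T then if x i = 0 then g else x i else 0, ?_, ?_⟩ <;>
  · ext i
    by_cases hi : i ∈ T <;> by_cases hx : x i = 0 <;> simp [Set.mem_symmDiff, hi, hx, hg]

section Sparsity

variable {ι : Type*} [Fintype ι]

theorem exists_card_eq_and_card_symmDiff_le [DecidableEq ι] {S : Finset ι} {k : ℕ}
    (hS : #S ≤ 2 * k) (hk : k ≤ Fintype.card ι) : ∃ T : Finset ι, #T = k ∧ #(T ∆ S) ≤ k := by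
  rcases le_total k #S with hkS | hSk
  · obtain ⟨T, hTS, hT⟩ := exists_subset_card_eq hkS
    refine ⟨T, hT, ?_⟩
    rw [symmDiff_of_le hTS, card_sdiff_of_subset hTS]
    lia
  · obtain ⟨T, hST, hT⟩ := exists_superset_card_eq hSk hk
    refine ⟨T, hT, ?_⟩
    rw [symmDiff_of_ge hST]
    exact (card_le_card sdiff_subset).trans hT.le

theorem hammingNorm_eq_card_of_support_eq {G : Type*} [Zero G] [DecidableEq G] {a : ι → G}
    {T : Finset ι} (ha : support a = T) : hammingNorm a = #T := by
  have hfilter : ({i | a i ≠ 0} : Finset ι) = T := by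
    rw [← coe_inj, ← ha, coe_filter_univ, support]
  exact congrArg card hfilter

theorem exists_hammingNorm_eq_and_hammingNorm_sub_le {G : Type*} [AddGroup G] [Nontrivial G]
    [DecidableEq G] (x : ι → G) {k : ℕ} (hx : hammingNorm x ≤ 2 * k) (hk : k ≤ Fintype.card ι) :
    ∃ a : ι → G, hammingNorm a = k ∧ hammingNorm (a - x) ≤ k := by
  classical
  obtain ⟨T, hT, hTx⟩ := exists_card_eq_and_card_symmDiff_le hx hk
  obtain ⟨a, ha, hax⟩ := exists_support_eq_and_support_sub_eq_symmDiff x (T : Set ι)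
  refine ⟨a, (hammingNorm_eq_card_of_support_eq ha).trans hT,
    (hammingNorm_eq_card_of_support_eq ?_).trans_le hTx⟩
  rw [hax, coe_symmDiff, coe_filter_univ, support]

end Sparsity

section Identifiability

variable {V ι G : Type*} [Fintype ι] [DecidableEq G]

/-- The outlier vector `a₀` is identifiable for the measurement map `h`: whatever the true input
`v₀`, the pair `(v₀, a₀)` is the only explanation of the data `h v₀ + a₀` by an outlier vector at
least as sparse as `a₀`. Sparsity is measured by `hammingNorm`, the number of nonzero entries. -/
def IsIdentifiable [Zero G] [Add G] (h : V → ι → G) (a₀ : ι → G) : Prop :=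
  ∀ (v₀ v : V) (a : ι → G),
    h v + a = h v₀ + a₀ → hammingNorm a ≤ hammingNorm a₀ → (v, a) = (v₀, a₀)

theorem not_isIdentifiable_iff [Zero G] [Add G] {h : V → ι → G} {a₀ : ι → G} :
    ¬ IsIdentifiable h a₀ ↔ ∃ (v₀ v : V) (a : ι → G),
      (v, a) ≠ (v₀, a₀) ∧ h v + a = h v₀ + a₀ ∧ hammingNorm a ≤ hammingNorm a₀ := by
  simp only [IsIdentifiable, not_forall, exists_prop]
  grind

theorem not_isIdentifiable_of_hammingNorm_sub_le [AddCommGroup G] {h : V → ι → G} {v v' : V}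
    (hne : v ≠ v') {a₀ : ι → G} (ha₀ : hammingNorm (a₀ - (h v - h v')) ≤ hammingNorm a₀) :
    ¬ IsIdentifiable h a₀ := fun hident ↦
  have hdata : h v + (a₀ - (h v - h v')) = h v' + a₀ := by abel
  hne (congrArg Prod.fst (hident v' v _ hdata ha₀))

theorem identifiability_sharpness_general [AddCommGroup G] [Nontrivial G] (h : V → ι → G) {v v' : V}
    (hne : v ≠ v') {k : ℕ} (hdist : hammingNorm (h v - h v') ≤ 2 * k) (hk : k ≤ Fintype.card ι) :
    ∃ a₀ : ι → G, hammingNorm a₀ = k ∧ ¬ IsIdentifiable h a₀ := by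
  obtain ⟨a₀, ha₀, hsub⟩ := exists_hammingNorm_eq_and_hammingNorm_sub_le (h v - h v') hdist hk
  exact ⟨a₀, ha₀, not_isIdentifiable_of_hammingNorm_sub_le hne (hsub.trans_eq ha₀.symm)⟩

end Identifiability

theorem l0_eq_hammingNorm {M : ℕ} (a : Fin M → ℝ) : l0 a = hammingNorm a := rfl

/-- Proposition 1 (identifiability sharpness): if `D ≥ 1` is the measurement distance
of `h` and `⌊(D − 1)/2⌋ + 1 ≤ M`, then there exists an outlier vector `a₀` with
`‖a₀‖₀ = ⌊(D − 1)/2⌋ + 1` that is not identifiable. -/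
theorem identifiability_sharpness {N M : ℕ} (hN : 1 ≤ N) (hM : 1 ≤ M)
    (h : (Fin N → ℂ) → (Fin M → ℝ)) (D : ℕ) (hD : 1 ≤ D)
    (hDM : (D - 1) / 2 + 1 ≤ M)
    (hDle : ∀ v v' : Fin N → ℂ, v ≠ v' → D ≤ l0 (h v - h v'))
    (hDeq : ∃ v v' : Fin N → ℂ, v ≠ v' ∧ l0 (h v - h v') = D) :
    ∃ a₀ : Fin M → ℝ, l0 a₀ = (D - 1) / 2 + 1 ∧
      ∃ (v₀ : Fin N → ℂ) (v : Fin N → ℂ) (a : Fin M → ℝ),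
        (v, a) ≠ (v₀, a₀) ∧ h v + a = h v₀ + a₀ ∧ l0 a ≤ l0 a₀ := by
  obtain ⟨v, v', hne, hdist⟩ := hDeq
  obtain ⟨a₀, ha₀, hident⟩ := identifiability_sharpness_general h hne
    (k := (D - 1) / 2 + 1) (by rw [← l0_eq_hammingNorm]; lia) (by simpa using hDM)
  exact ⟨a₀, ha₀, not_isIdentifiable_iff.mp hident⟩
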